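/- Let A and B be nonempty finite subsets of a positive definite metric space X, and let v ∈ ℝ^{A∪B}. With the diversifiers w_{A,+} and w_{B,+} regarded as vectors indexed by A∪B by extension with zeros, one has |Σ_{x,y∈A∪B} e^{-d(x,y)} v_x ((w_{A,+})_y − (w_{B,+})_y)| ≤ ‖v‖_W · 4√2 · |A∪B|_+ · d_H(A,B)^{1/2}, where ‖v‖_W = (Σ_{x,y∈A∪B} e^{-d(x,y)} v_x v_y)^{1/2}, |·|_+ denotes maximum diversity, and d_H is the Hausdorff distance. -/

import Mathlib

open scoped BigOperators

/-!
By the Cauchy–Schwarz inequality for the positive semidefinite form `quadW (A ∪ B)`, it suffices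
to bound `‖wA - wB‖_W`. Write `δ` for the Hausdorff distance and `M = |A ∪ B|₊`.

A diversifier `w` of `s` satisfies `‖w‖_W² = |s|₊ = Σ w`, and the first-order optimality condition
(perturb `w` by a positive multiple of a point mass) says that its potential
`x ↦ Σ_y e^{-d(x,y)} w_y` is at least `1` on `s` (`IsDiversifier.one_le_pot`). Moving from `s` to a
point at distance at most `δ` costs a factor of at most `e^{-δ}`, so the potential of `wA` is at
least `e^{-δ}` on `B`, and vice versa. Hence `⟨wA, wB⟩_W ≥ e^{-δ} |A|₊` and
`⟨wA, wB⟩_W ≥ e^{-δ} |B|₊`, and therefore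
`‖wA - wB‖_W² = |A|₊ + |B|₊ - 2 ⟨wA, wB⟩_W ≤ (1 - e^{-δ}) (|A|₊ + |B|₊) ≤ 2 δ M`.
As `M ≥ 1`, this is at most `2 δ M²`, which even gives the constant `√2` in place of `4√2`.
-/

/-- A metric space is positive definite if every finite subspace has positive definite
similarity matrix `(e^{-d(x,y)})`. -/
def PosDefSpace (X : Type*) [MetricSpace X] : Prop :=
  ∀ s : Finset X,
    Matrix.PosDef (Matrix.of fun x y : s => Real.exp (-dist (x : X) (y : X)))

/-- The pairing `Σ_{x,y∈s} e^{-d(x,y)} u_x v_y`. -/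
noncomputable def quadW {X : Type*} [MetricSpace X] (s : Finset X) (u v : X → ℝ) : ℝ :=
  ∑ x ∈ s, ∑ y ∈ s, Real.exp (-dist x y) * u x * v y

/-- The quotient `(Σ_{x∈s} w_x)² / (Σ_{x,y∈s} e^{-d(x,y)} w_x w_y)`. -/
noncomputable def ratioW {X : Type*} [MetricSpace X] (s : Finset X) (w : X → ℝ) : ℝ :=
  (∑ x ∈ s, w x) ^ 2 / quadW s w w

/-- The maximum diversity `|s|₊` of a finite subset `s`. -/
noncomputable def finMaxDiv {X : Type*} [MetricSpace X] (s : Finset X) : ℝ :=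
  sSup {r : ℝ | ∃ w : X → ℝ,
    (∀ x ∉ s, w x = 0) ∧ w ≠ 0 ∧ (∀ x, 0 ≤ w x) ∧ r = ratioW s w}

/-- `w` is the diversifier of the finite subset `s` (extended by zero outside `s`). -/
def IsDiversifier {X : Type*} [MetricSpace X] (s : Finset X) (w : X → ℝ) : Prop :=
  (∀ x ∉ s, w x = 0) ∧ w ≠ 0 ∧ (∀ x, 0 ≤ w x) ∧
    (∀ v : X → ℝ, (∀ x ∉ s, v x = 0) → v ≠ 0 → (∀ x, 0 ≤ v x) →
      ratioW s v ≤ ratioW s w) ∧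
    ∑ x ∈ s, w x = finMaxDiv s

section Aux

variable {X : Type*} [MetricSpace X]

lemma quadW_comm (s : Finset X) (u v : X → ℝ) : quadW s u v = quadW s v u := by
  unfold quadW
  rw [Finset.sum_comm]
  refine Finset.sum_congr rfl fun x _ => Finset.sum_congr rfl fun y _ => ?_
  rw [dist_comm]
  ring

lemma quadW_add_smul (s : Finset X) (u v : X → ℝ) (t : ℝ) :
    quadW s (u + t • v) (u + t • v) =
      quadW s u u + 2 * t * quadW s u v + t ^ 2 * quadW s v v := by
  have h : quadW s (u + t • v) (u + t • v) =
      quadW s u u + t * quadW s u v + t * quadW s v u + t ^ 2 * quadW s v v := by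
    simp only [quadW, Finset.mul_sum, ← Finset.sum_add_distrib]
    refine Finset.sum_congr rfl fun x _ => Finset.sum_congr rfl fun y _ => ?_
    simp only [Pi.add_apply, Pi.smul_apply, smul_eq_mul]
    ring
  rw [h, quadW_comm s v u]
  ring

lemma quadW_nonneg (hpd : PosDefSpace X) (s : Finset X) (u : X → ℝ) : 0 ≤ quadW s u u := by
  have h := (hpd s).posSemidef.dotProduct_mulVec_nonneg (fun x : s => u x)
  have e : quadW s u u = ∑ x : s, ∑ y : s, Real.exp (-dist (x : X) (y : X)) * u x * u y := by
    unfold quadW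
    rw [← Finset.sum_coe_sort s]
    refine Finset.sum_congr rfl fun x _ => ?_
    rw [← Finset.sum_coe_sort s]
  rw [e]
  refine h.trans_eq ?_
  simp only [dotProduct, Matrix.mulVec, Finset.mul_sum, Matrix.of_apply]
  refine Finset.sum_congr rfl fun x _ => Finset.sum_congr rfl fun y _ => ?_
  rw [Pi.star_apply, star_trivial]
  ring

lemma abs_quadW_le (hpd : PosDefSpace X) (s : Finset X) (u v : X → ℝ) :
    |quadW s u v| ≤ Real.sqrt (quadW s u u) * Real.sqrt (quadW s v v) := by
  have hd := discrim_le_zero (a := quadW s v v) (b := 2 * quadW s u v) (c := quadW s u u)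
    (fun t => by
      have := quadW_nonneg hpd s (u + t • v)
      rw [quadW_add_smul] at this
      linarith)
  rw [← Real.sqrt_mul (quadW_nonneg hpd s u)]
  apply Real.abs_le_sqrt
  unfold discrim at hd
  linarith

/-- The potential `Σ_{y∈s} e^{-d(x,y)} w_y` of the weight `w` at the point `x`. -/
noncomputable def pot (s : Finset X) (w : X → ℝ) (x : X) : ℝ :=
  ∑ y ∈ s, Real.exp (-dist x y) * w y

lemma quadW_eq_pot (s : Finset X) (u v : X → ℝ) :
    quadW s u v = ∑ x ∈ s, u x * pot s v x := by
  simp only [quadW, pot, Finset.mul_sum]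
  refine Finset.sum_congr rfl fun x _ => Finset.sum_congr rfl fun y _ => ?_
  ring

lemma pot_subset {s t : Finset X} (h : s ⊆ t) {w : X → ℝ} (hw : ∀ x ∉ s, w x = 0) (x : X) :
    pot t w x = pot s w x :=
  (Finset.sum_subset h fun y _ hy => by rw [hw y hy, mul_zero]).symm

lemma quadW_subset {s t : Finset X} (h : s ⊆ t) {u : X → ℝ} (hu : ∀ x ∉ s, u x = 0)
    (v : X → ℝ) : quadW t u v = ∑ x ∈ s, u x * pot t v x := by
  rw [quadW_eq_pot]
  exact (Finset.sum_subset h fun y _ hy => by rw [hu y hy, zero_mul]).symm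

lemma quadW_subset_self {s t : Finset X} (h : s ⊆ t) {u : X → ℝ} (hu : ∀ x ∉ s, u x = 0) :
    quadW t u u = quadW s u u := by
  rw [quadW_subset h hu, quadW_eq_pot]
  simp only [pot_subset h hu]

lemma ratioW_subset {s t : Finset X} (h : s ⊆ t) {u : X → ℝ} (hu : ∀ x ∉ s, u x = 0) :
    ratioW t u = ratioW s u := by
  unfold ratioW
  rw [quadW_subset_self h hu, Finset.sum_subset h fun y _ hy => hu y hy]

lemma pot_mono_dist (s : Finset X) {w : X → ℝ} (hw : ∀ x, 0 ≤ w x) {x a : X} {δ : ℝ}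
    (h : dist x a ≤ δ) : Real.exp (-δ) * pot s w a ≤ pot s w x := by
  simp only [pot, Finset.mul_sum]
  refine Finset.sum_le_sum fun y _ => ?_
  rw [← mul_assoc, ← Real.exp_add]
  refine mul_le_mul_of_nonneg_right (Real.exp_le_exp.2 ?_) (hw y)
  linarith [dist_triangle x a y]

lemma sum_sq_le_quadW (s : Finset X) {w : X → ℝ} (hw : ∀ x, 0 ≤ w x) :
    ∑ x ∈ s, w x ^ 2 ≤ quadW s w w := by
  refine Finset.sum_le_sum fun x hx => ?_
  have := Finset.single_le_sum (f := fun y => Real.exp (-dist x y) * w x * w y)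
    (fun y _ => mul_nonneg (mul_nonneg (Real.exp_pos _).le (hw x)) (hw y)) hx
  simp only [dist_self, neg_zero, Real.exp_zero, one_mul] at this
  linarith [sq (w x)]

lemma sum_pos_of_ne_zero {Y : Type*} {s : Finset Y} {w : Y → ℝ} (h0 : ∀ x ∉ s, w x = 0)
    (hne : w ≠ 0) (hw : ∀ x, 0 ≤ w x) : 0 < ∑ x ∈ s, w x := by
  obtain ⟨x, hx⟩ := Function.ne_iff.1 hne
  refine Finset.sum_pos' (fun x _ => hw x) ⟨x, ?_, lt_of_le_of_ne (hw x) (Ne.symm hx)⟩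
  by_contra hxs
  exact hx (h0 x hxs)

lemma quadW_pos {s : Finset X} {w : X → ℝ} (h0 : ∀ x ∉ s, w x = 0) (hne : w ≠ 0)
    (hw : ∀ x, 0 ≤ w x) : 0 < quadW s w w := by
  have h1 := sum_pos_of_ne_zero h0 hne hw
  have h2 := sum_sq_le_quadW s hw
  have h3 := sq_sum_le_card_mul_sum_sq (s := s) (f := w)
  by_contra hq
  have hc : (0 : ℝ) ≤ (s.card : ℝ) := Nat.cast_nonneg _
  nlinarith [sq_pos_of_pos h1]

/-- The ratios defining `finMaxDiv s` are at most the number of points of `s`, since the diagonal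
terms alone already bound the denominator below. -/
lemma ratio_bddAbove (s : Finset X) : BddAbove {r : ℝ | ∃ w : X → ℝ,
    (∀ x ∉ s, w x = 0) ∧ w ≠ 0 ∧ (∀ x, 0 ≤ w x) ∧ r = ratioW s w} := by
  refine ⟨s.card, ?_⟩
  rintro r ⟨w, h0, hne, hw, rfl⟩
  have h3 := sq_sum_le_card_mul_sum_sq (s := s) (f := w)
  unfold ratioW
  rw [div_le_iff₀ (quadW_pos h0 hne hw)]
  exact h3.trans (mul_le_mul_of_nonneg_left (sum_sq_le_quadW s hw) (Nat.cast_nonneg _))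

lemma single_apply_notMem {Y : Type*} [DecidableEq Y] {s : Finset Y} {x y : Y} (hx : x ∈ s)
    (hy : y ∉ s) : (Pi.single x 1 : Y → ℝ) y = 0 := by
  have hyx : y ≠ x := by
    rintro rfl
    exact hy hx
  exact Pi.single_eq_of_ne hyx _

lemma single_apply_nonneg {Y : Type*} [DecidableEq Y] (x y : Y) :
    0 ≤ (Pi.single x 1 : Y → ℝ) y := by
  rw [Pi.single_apply]
  split_ifs <;> norm_num

lemma quadW_single_right [DecidableEq X] {s : Finset X} {x : X} (hx : x ∈ s) (w : X → ℝ) :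
    quadW s w (Pi.single x 1) = pot s w x := by
  rw [quadW_comm, quadW_eq_pot, Finset.sum_eq_single x]
  · simp
  · intro y _ hy
    simp [hy]
  · exact fun h => absurd hx h

lemma pot_single [DecidableEq X] {s : Finset X} {x : X} (hx : x ∈ s) :
    pot s (Pi.single x 1) x = 1 := by
  unfold pot
  rw [Finset.sum_eq_single x]
  · simp
  · intro y _ hy
    simp [hy]
  · exact fun h => absurd hx h

lemma one_le_finMaxDiv {s : Finset X} (hs : s.Nonempty) : 1 ≤ finMaxDiv s := by
  classical
  obtain ⟨x, hx⟩ := hs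
  refine le_csSup (ratio_bddAbove s) ⟨Pi.single x 1, ?_, ?_, ?_, ?_⟩
  · exact fun y hy => single_apply_notMem hx hy
  · simp
  · exact single_apply_nonneg x
  · unfold ratioW
    rw [quadW_single_right hx, pot_single hx, Finset.sum_pi_single']
    simp [hx]

lemma finMaxDiv_mono {s t : Finset X} (hs : s.Nonempty) (h : s ⊆ t) :
    finMaxDiv s ≤ finMaxDiv t := by
  classical
  obtain ⟨x, hx⟩ := hs
  refine csSup_le_csSup (ratio_bddAbove t) ⟨_, Pi.single x 1, ?_, ?_, ?_, rfl⟩ ?_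
  · exact fun y hy => single_apply_notMem hx hy
  · simp
  · exact single_apply_nonneg x
  · rintro r ⟨w, h0, hne, hw, rfl⟩
    exact ⟨w, fun x hx => h0 x fun hxs => hx (h hxs), hne, hw, (ratioW_subset h h0).symm⟩

lemma IsDiversifier.ratioW_eq {s : Finset X} {w : X → ℝ} (hw : IsDiversifier s w) :
    ratioW s w = finMaxDiv s := by
  obtain ⟨h0, hne, hnn, hmax, -⟩ := hw
  refine le_antisymm (le_csSup (ratio_bddAbove s) ⟨w, h0, hne, hnn, rfl⟩)
    (csSup_le ⟨_, w, h0, hne, hnn, rfl⟩ ?_)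
  rintro r ⟨u, hu0, hune, hunn, rfl⟩
  exact hmax u hu0 hune hunn

lemma IsDiversifier.quadW_self {s : Finset X} {w : X → ℝ} (hw : IsDiversifier s w) :
    quadW s w w = finMaxDiv s := by
  have hr := hw.ratioW_eq
  obtain ⟨h0, hne, hnn, -, hsum⟩ := hw
  have hS := sum_pos_of_ne_zero h0 hne hnn
  have hQ := quadW_pos h0 hne hnn
  unfold ratioW at hr
  rw [hsum] at hr hS
  rw [div_eq_iff hQ.ne', sq] at hr
  exact (mul_left_cancel₀ hS.ne' hr).symm

/-- First-order optimality: the potential of a diversifier is at least `1` on the whole set. -/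
lemma IsDiversifier.one_le_pot {s : Finset X} {w : X → ℝ} (hw : IsDiversifier s w) {x : X}
    (hx : x ∈ s) : 1 ≤ pot s w x := by
  classical
  have hq := hw.quadW_self
  have hr := hw.ratioW_eq
  obtain ⟨h0, hne, hnn, hmax, hsum⟩ := hw
  have hS := sum_pos_of_ne_zero h0 hne hnn
  by_contra! hp
  -- With `p` the potential at `x`, the step `t = 1 - p > 0` already strictly increases the ratio.
  set p := pot s w x with hpdef
  have ht : 0 < 1 - p := by linarith
  have hnn' : ∀ y, 0 ≤ (w + (1 - p) • (Pi.single x 1 : X → ℝ)) y := fun y =>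
    add_nonneg (hnn y) (mul_nonneg ht.le (single_apply_nonneg x y))
  have h0' : ∀ y ∉ s, (w + (1 - p) • (Pi.single x 1 : X → ℝ)) y = 0 := by
    intro y hy
    simp [h0 y hy, single_apply_notMem hx hy]
  have hne' : w + (1 - p) • (Pi.single x 1 : X → ℝ) ≠ 0 := by
    intro h
    have := congrFun h x
    simp at this
    linarith [hnn x]
  have hle := hmax _ h0' hne' hnn'
  rw [hr] at hle
  have hQ := quadW_pos h0' hne' hnn'
  unfold ratioW at hle
  rw [div_le_iff₀ hQ, quadW_add_smul, hq, quadW_single_right hx, quadW_single_right hx,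
    pot_single hx, ← hpdef] at hle
  have hs' : ∑ y ∈ s, (w + (1 - p) • (Pi.single x 1 : X → ℝ)) y = finMaxDiv s + (1 - p) := by
    simp only [Pi.add_apply, Pi.smul_apply, smul_eq_mul, Finset.sum_add_distrib,
      ← Finset.mul_sum, hsum, Finset.sum_pi_single', hx, if_true, mul_one]
  rw [hs'] at hle
  rw [hsum] at hS
  nlinarith [mul_pos ht ht, mul_pos hS (mul_pos ht ht)]

lemma exists_dist_le_hausdorffDist {A B : Finset X} (hA : A.Nonempty) {x : X} (hx : x ∈ B) :
    ∃ a ∈ A, dist x a ≤ Metric.hausdorffDist (A : Set X) (B : Set X) := by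
  have hA' : (A : Set X).Nonempty := by simpa using hA
  have hx' : x ∈ (B : Set X) := by simpa using hx
  obtain ⟨a, ha, hda⟩ := A.finite_toSet.isCompact.exists_infDist_eq_dist hA' x
  refine ⟨a, by simpa using ha, ?_⟩
  rw [← hda, Metric.hausdorffDist_comm]
  exact Metric.infDist_le_hausdorffDist_of_mem hx'
    (Metric.hausdorffEDist_ne_top_of_nonempty_of_bounded ⟨x, hx'⟩ hA'
      B.finite_toSet.isBounded A.finite_toSet.isBounded)

/-- The pairing of two diversifiers is nearly the mass of either of them, because the potential of
`wA` is at least `e^{-d_H(A,B)}` at every point of `B`. -/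
lemma exp_mul_finMaxDiv_le [DecidableEq X] {A B t : Finset X} (hA : A.Nonempty)
    (hAt : A ⊆ t) (hBt : B ⊆ t) {wA wB : X → ℝ}
    (hwA : IsDiversifier A wA) (hwB : IsDiversifier B wB) :
    Real.exp (-Metric.hausdorffDist (A : Set X) (B : Set X)) * finMaxDiv B ≤
      quadW t wB wA := by
  rw [quadW_subset hBt hwB.1, ← hwB.2.2.2.2, Finset.mul_sum]
  refine Finset.sum_le_sum fun x hx => ?_
  obtain ⟨a, ha, hd⟩ := exists_dist_le_hausdorffDist hA hx
  rw [pot_subset hAt hwA.1, mul_comm]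
  refine mul_le_mul_of_nonneg_left ?_ (hwB.2.2.1 x)
  refine le_trans ?_ (pot_mono_dist A hwA.2.2.1 hd)
  exact le_mul_of_one_le_right (Real.exp_pos _).le (hwA.one_le_pot ha)

end Aux

/-- `|Σ e^{-d(x,y)} v_x ((w_{A,+})_y − (w_{B,+})_y)| ≤ ‖v‖_W · 4√2 · |A∪B|₊ · d_H(A,B)^{1/2}`. -/
theorem stmt16 {X : Type*} [MetricSpace X] [DecidableEq X] (hpd : PosDefSpace X)
    (A B : Finset X) (hA : A.Nonempty) (hB : B.Nonempty)
    (v wA wB : X → ℝ) (hv : ∀ x ∉ A ∪ B, v x = 0)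
    (hwA : IsDiversifier A wA) (hwB : IsDiversifier B wB) :
    |quadW (A ∪ B) v (wA - wB)| ≤
      Real.sqrt (quadW (A ∪ B) v v) *
        (4 * Real.sqrt 2 * finMaxDiv (A ∪ B) *
          Real.sqrt (Metric.hausdorffDist (↑A : Set X) (↑B : Set X))) := by
  have hAt : A ⊆ A ∪ B := Finset.subset_union_left
  have hBt : B ⊆ A ∪ B := Finset.subset_union_right
  refine (abs_quadW_le hpd _ _ _).trans
    (mul_le_mul_of_nonneg_left ?_ (Real.sqrt_nonneg _))
  have h1 := exp_mul_finMaxDiv_le hA hAt hBt hwA hwB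
  have h2 := exp_mul_finMaxDiv_le hB hBt hAt hwB hwA
  rw [Metric.hausdorffDist_comm] at h2
  rw [quadW_comm] at h1
  have hδ : 0 ≤ Metric.hausdorffDist (A : Set X) (B : Set X) := Metric.hausdorffDist_nonneg
  set δ := Metric.hausdorffDist (A : Set X) (B : Set X)
  have hexp : 1 - δ ≤ Real.exp (-δ) := by linarith [Real.add_one_le_exp (-δ)]
  have hMA := finMaxDiv_mono hA hAt
  have hMB := finMaxDiv_mono hB hBt
  have hA1 := one_le_finMaxDiv hA
  have hB1 := one_le_finMaxDiv hB
  have hM1 : 1 ≤ finMaxDiv (A ∪ B) := hA1.trans hMA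
  have hsub : wA - wB = wA + (-1 : ℝ) • wB := by
    rw [neg_one_smul, sub_eq_add_neg]
  have hexpand : quadW (A ∪ B) (wA - wB) (wA - wB) =
      finMaxDiv A + finMaxDiv B - 2 * quadW (A ∪ B) wA wB := by
    rw [hsub, quadW_add_smul, quadW_subset_self hAt hwA.1, quadW_subset_self hBt hwB.1,
      hwA.quadW_self, hwB.quadW_self]
    ring
  set M := finMaxDiv (A ∪ B)
  have hbound : quadW (A ∪ B) (wA - wB) (wA - wB) ≤ 2 * M ^ 2 * δ := by
    have e1 : (1 - δ) * finMaxDiv A ≤ Real.exp (-δ) * finMaxDiv A :=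
      mul_le_mul_of_nonneg_right hexp (by linarith)
    have e2 : (1 - δ) * finMaxDiv B ≤ Real.exp (-δ) * finMaxDiv B :=
      mul_le_mul_of_nonneg_right hexp (by linarith)
    have e3 : δ * finMaxDiv A ≤ δ * M := mul_le_mul_of_nonneg_left hMA hδ
    have e4 : δ * finMaxDiv B ≤ δ * M := mul_le_mul_of_nonneg_left hMB hδ
    have e5 : δ * M ≤ δ * M ^ 2 := mul_le_mul_of_nonneg_left (by nlinarith) hδ
    rw [hexpand]
    linarith
  have hroot : Real.sqrt (2 * M ^ 2 * δ) = Real.sqrt 2 * M * Real.sqrt δ := by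
    rw [Real.sqrt_mul (by positivity), Real.sqrt_mul (by norm_num),
      Real.sqrt_sq (by linarith)]
  have hnn : 0 ≤ Real.sqrt 2 * M * Real.sqrt δ := by rw [← hroot]; exact Real.sqrt_nonneg _
  have := Real.sqrt_le_sqrt hbound
  rw [hroot] at this
  linarith
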